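/- Let p₁, p₂, p₃ be distinct rational primes such that (p₁, p₂, p₃) ≡ (2, 2, 5) (mod 9) or (p₁, p₂, p₃) ≡ (5, 5, 2) (mod 9), and set A = p₁p₂p₃². Then the subset of k*/(k*)³ consisting of the classes [α] of those α ∈ k* for which C_{A,α}(k_q) ≠ ∅ for every prime element q of ℤ[ζ₃] is exactly the subgroup of k*/(k*)³ generated by the classes [A] and [p₁p₂²]. -/

import Mathlib

open NumberField IsDedekindDomain

/-- The height-one prime of a Dedekind domain determined by a prime element. -/
noncomputable def primeSpec {R : Type*} [CommRing R] [IsDomain R] [IsDedekindDomain R]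
    {q : R} (hq : Prime q) : HeightOneSpectrum R where
  asIdeal := Ideal.span {q}
  isPrime := (Ideal.span_singleton_prime hq.ne_zero).mpr hq
  ne_bot := by simpa [Ne, Ideal.span_singleton_eq_bot] using hq.ne_zero

section loc
variable {R : Type*} [CommRing R] [IsDomain R] [IsDedekindDomain R]
  (K : Type*) [Field K] [Algebra R K] [IsFractionRing R K] {q : R} (hq : Prime q)

open HeightOneSpectrum

lemma val_q_pow (N : ℕ) :
    Valued.v (algebraMap R ((primeSpec hq).adicCompletion K) (q ^ N)) = WithZero.exp (-(N : ℤ)) := by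
  have h1 : (primeSpec hq).intValuation q = WithZero.exp (-1 : ℤ) :=
    intValuation_singleton _ hq.ne_zero rfl
  rw [map_pow, map_pow]
  have := valuedAdicCompletion_eq_valuation (K := K) (primeSpec hq) q
  rw [valuation_of_algebraMap, h1] at this
  erw [this]
  rw [← WithZero.exp_nsmul]
  simp

lemma val_le_iff (N : ℕ) (r : R) :
    Valued.v (algebraMap R ((primeSpec hq).adicCompletion K) r) ≤ WithZero.exp (-(N : ℤ)) ↔
      q ^ N ∣ r := by
  have := valuedAdicCompletion_eq_valuation (K := K) (primeSpec hq) r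
  rw [valuation_of_algebraMap] at this
  erw [this]
  rw [intValuation_le_pow_iff_mem]
  change r ∈ (Ideal.span {q}) ^ N ↔ _
  rw [Ideal.span_singleton_pow, Ideal.mem_span_singleton]

lemma val_int_le_one (r : R) :
    Valued.v (algebraMap R ((primeSpec hq).adicCompletion K) r) ≤ 1 := by
  simpa using (val_le_iff K hq 0 r)

lemma approx (x : (primeSpec hq).adicCompletion K) (hx : Valued.v x ≤ 1) (N : ℕ) :
    ∃ r : R, Valued.v (x - algebraMap R ((primeSpec hq).adicCompletion K) r) ≤
      WithZero.exp (-(N : ℤ)) := by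
  have hopen : {y : (primeSpec hq).adicCompletion K | Valued.v (y - x) < (WithZero.exp (-(N : ℤ)))}
      ∈ nhds x := by
    rw [Valued.mem_nhds]
    have h' : Valued.v.restrict (algebraMap R ((primeSpec hq).adicCompletion K) (q ^ N)) ≠ 0 := by
      rw [Ne, Valuation.restrict_eq_zero_iff, val_q_pow]; simp
    refine ⟨Units.mk0 _ h', fun y hy => ?_⟩
    have := Valued.v.restrict_lt_iff.mp hy
    rwa [val_q_pow] at this
  obtain ⟨y, hy⟩ := (denseRange_algebraMap (K := K) (primeSpec hq)).exists_mem_open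
    isOpen_interior ⟨x, mem_interior_iff_mem_nhds.mpr hopen⟩
  have hy := interior_subset hy
  simp only [Set.mem_ofPred_eq] at hy
  have hy1 : Valued.v (algebraMap K ((primeSpec hq).adicCompletion K) y) ≤ 1 := by
    have h2 : algebraMap K ((primeSpec hq).adicCompletion K) y
      = (algebraMap K ((primeSpec hq).adicCompletion K) y - x) + x := by ring
    rw [h2]
    refine Valuation.map_add_le _ (hy.le.trans ?_) hx
    rw [← WithZero.exp_zero, WithZero.exp_le_exp]; omega
  have hyv : ∀ k : K, Valued.v (algebraMap K ((primeSpec hq).adicCompletion K) k) =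
    (primeSpec hq).valuation K k := valuedAdicCompletion_eq_valuation' (primeSpec hq)
  rw [hyv] at hy1
  obtain ⟨a, ha⟩ := exists_valuation_sub_lt_of_integer (primeSpec hq) hy1
    (Units.mk0 (WithZero.exp (-(N : ℤ))) (by simp))
  refine ⟨a, ?_⟩
  rw [← hyv, map_sub, ← IsScalarTower.algebraMap_apply] at ha
  rw [Valuation.map_sub_swap]
  have h2 : algebraMap R ((primeSpec hq).adicCompletion K) a - x =
    (algebraMap R ((primeSpec hq).adicCompletion K) a - algebraMap K _ y) + (algebraMap K _ y - x) := by
    ring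
  rw [h2]
  exact Valuation.map_add_le _ ha.le hy.le

lemma val_cube_sub (x r : (primeSpec hq).adicCompletion K) (a : R) (hx : Valued.v x ≤ 1)
    (hr : Valued.v r ≤ 1) (N : ℕ) (h : Valued.v (x - r) ≤ WithZero.exp (-(N : ℤ))) :
    Valued.v (algebraMap R _ a * x ^ 3 - algebraMap R _ a * r ^ 3) ≤ WithZero.exp (-(N : ℤ)) := by
  have : algebraMap R _ a * x ^ 3 - algebraMap R _ a * r ^ 3 =
    (x - r) * (algebraMap R _ a * (x ^ 2 + x * r + r ^ 2)) := by ring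
  rw [this, map_mul]
  refine mul_le_of_le_of_le_one h ?_
  rw [map_mul]
  refine mul_le_one' (val_int_le_one K hq a) ?_
  refine Valuation.map_add_le _ (Valuation.map_add_le _ ?_ ?_) ?_
  · rw [map_pow]; exact pow_le_one' hx 2
  · rw [map_mul]; exact mul_le_one' hx hr
  · rw [map_pow]; exact pow_le_one' hr 2

/-- transfer -/
lemma transfer (a b c : R)
    (h : ∃ x y z : (primeSpec hq).adicCompletion K, ¬(x = 0 ∧ y = 0 ∧ z = 0) ∧
      algebraMap R _ a * x ^ 3 + algebraMap R _ b * y ^ 3 = algebraMap R _ c * z ^ 3) (N : ℕ)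
      (hN : N ≠ 0) :
    ∃ x y z : R, ¬(q ∣ x ∧ q ∣ y ∧ q ∣ z) ∧ q ^ N ∣ a * x ^ 3 + b * y ^ 3 - c * z ^ 3 := by
  obtain ⟨x, y, z, h0, he⟩ := h
  obtain ⟨w, hw0, hw, hx, hy, hz⟩ : ∃ w, w ≠ 0 ∧ (w = x ∨ w = y ∨ w = z) ∧
      Valued.v x ≤ Valued.v w ∧ Valued.v y ≤ Valued.v w ∧ Valued.v z ≤ Valued.v w := by
    by_contra hcon
    push Not at hcon
    apply h0
    have key : ∀ w, (w = x ∨ w = y ∨ w = z) → Valued.v x ≤ Valued.v w → Valued.v y ≤ Valued.v w →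
      Valued.v z ≤ Valued.v w → x = 0 ∧ y = 0 ∧ z = 0 := by
      intro w h1 h2 h3 h4
      by_cases hw : w = 0
      · subst hw
        simp only [map_zero, le_zero_iff, Valuation.zero_iff] at h2 h3 h4
        exact ⟨h2, h3, h4⟩
      · exact absurd (hcon w hw h1 h2 h3) (not_lt.mpr h4)
    rcases le_total (Valued.v x) (Valued.v y) with h1 | h1 <;>
    rcases le_total (Valued.v y) (Valued.v z) with h2 | h2 <;>
    rcases le_total (Valued.v x) (Valued.v z) with h3 | h3
    · exact key z (by simp) h3 h2 le_rfl
    · exact key z (by simp) (h1.trans h2) h2 le_rfl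
    · exact key y (by simp) h1 le_rfl h2
    · exact key y (by simp) h1 le_rfl h2
    · exact key z (by simp) h3 h2 le_rfl
    · exact key x (by simp) le_rfl h1 h3
    · exact key x (by simp) le_rfl h1 (h2.trans h1)
    · exact key x (by simp) le_rfl h1 h3
  have hd : ∀ t, Valued.v t ≤ Valued.v w → Valued.v (t / w) ≤ 1 := by
    intro t ht
    rw [map_div₀]
    exact div_le_one_of_le₀ ht zero_le
  obtain ⟨x', hx'⟩ := approx K hq _ (hd x hx) N
  obtain ⟨y', hy'⟩ := approx K hq _ (hd y hy) N
  obtain ⟨z', hz'⟩ := approx K hq _ (hd z hz) N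
  have hone : ∀ (t : (primeSpec hq).adicCompletion K) (r : R), t = w →
      Valued.v (t / w - algebraMap R _ r) ≤ WithZero.exp (-(N : ℤ)) → ¬ q ∣ r := by
    intro t r ht h1 h2
    rw [ht, div_self hw0] at h1
    rw [← map_one (algebraMap R ((primeSpec hq).adicCompletion K)), ← map_sub, val_le_iff] at h1
    have h3 := (dvd_pow_self q hN).trans h1
    have h4 := dvd_add h3 h2
    rw [sub_add_cancel] at h4
    exact hq.not_isUnit (isUnit_of_dvd_one h4)
  refine ⟨x', y', z', ?_, ?_⟩
  · rintro ⟨h1, h2, h3⟩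
    rcases hw with hw | hw | hw
    · exact hone _ _ hw.symm hx' h1
    · exact hone _ _ hw.symm hy' h2
    · exact hone _ _ hw.symm hz' h3
  · rw [← val_le_iff K hq]
    have e : algebraMap R ((primeSpec hq).adicCompletion K) (a * x' ^ 3 + b * y' ^ 3 - c * z' ^ 3) =
      (algebraMap R _ c * (z / w) ^ 3 - algebraMap R _ c * (algebraMap R _ z') ^ 3) -
      ((algebraMap R _ a * (x / w) ^ 3 - algebraMap R _ a * (algebraMap R _ x') ^ 3) +
      (algebraMap R _ b * (y / w) ^ 3 - algebraMap R _ b * (algebraMap R _ y') ^ 3)) := by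
      simp only [map_sub, map_add, map_mul, map_pow]
      have : algebraMap R _ a * (x / w) ^ 3 + algebraMap R _ b * (y / w) ^ 3 =
        algebraMap R _ c * (z / w) ^ 3 := by
        simp only [div_pow, ← mul_div_assoc, ← add_div, he]
      linear_combination this
    rw [e]
    have h1 := val_cube_sub K hq _ _ c (hd z hz) (val_int_le_one K hq _) N hz'
    have h2 := val_cube_sub K hq _ _ a (hd x hx) (val_int_le_one K hq _) N hx'
    have h3 := val_cube_sub K hq _ _ b (hd y hy) (val_int_le_one K hq _) N hy'
    exact Valuation.map_sub_le _ h1 (Valuation.map_add_le _ h2 h3)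

end loc


section hens
variable {K : Type*} [Field K] [NumberField K] {q : 𝓞 K} (hq : Prime q)
open HeightOneSpectrum Polynomial

lemma hensel_seq {R : Type*} [CommRing R] [IsDomain R] [IsPrincipalIdealRing R] {q : R}
    (hq : Prime q) (f : R[X]) (x0 : R) (h0 : q ∣ f.eval x0)
    (h1 : ¬ q ∣ f.derivative.eval x0) :
    ∃ u : ℕ → R, ∀ n, q ^ (n + 1) ∣ f.eval (u n) ∧ q ^ (n + 1) ∣ u (n + 1) - u n := by
  have step : ∀ (n : ℕ) (x : R), ∃ y, (q ^ (n + 1) ∣ f.eval x ∧ q ∣ x - x0) →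
      (q ^ (n + 2) ∣ f.eval y ∧ q ∣ y - x0 ∧ q ^ (n + 1) ∣ y - x) := by
    intro n x
    by_cases hx : q ^ (n + 1) ∣ f.eval x ∧ q ∣ x - x0
    swap
    · exact ⟨x, fun h => absurd h hx⟩
    obtain ⟨⟨c, hc⟩, hx0⟩ := hx
    have hd : ¬ q ∣ f.derivative.eval x := by
      intro h
      apply h1
      have h2 := hx0.trans (Polynomial.sub_dvd_eval_sub x x0 f.derivative)
      have := dvd_sub h h2
      rwa [sub_sub_cancel] at this
    have hcop : IsCoprime q (f.derivative.eval x) :=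
      (hq.irreducible.coprime_iff_not_dvd).mpr hd
    obtain ⟨s, t, hst⟩ := hcop
    obtain ⟨k, hk⟩ := f.binomExpansion x (q ^ (n + 1) * (-c * t))
    refine ⟨x + q ^ (n + 1) * (-c * t), fun _ => ⟨?_, ?_, ?_⟩⟩
    · rw [hk, hc]
      have : q ^ (n + 1) * c + eval x (derivative f) * (q ^ (n + 1) * (-c * t)) +
        k * (q ^ (n + 1) * (-c * t)) ^ 2 = q ^ (n + 2) * (c * s + k * q ^ n * (c * t) ^ 2) := by
        linear_combination q ^ (n + 1) * (-c) * hst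
      rw [this]; exact dvd_mul_right _ _
    · rw [add_sub_right_comm]
      exact dvd_add hx0 (dvd_mul_of_dvd_left (dvd_pow_self q (by omega)) _)
    · rw [add_sub_cancel_left]; exact dvd_mul_right _ _
  choose g hg using step
  let u : ℕ → R := fun n => Nat.rec x0 (fun n x => g n x) n
  have hu : ∀ n, q ^ (n + 1) ∣ f.eval (u n) ∧ q ∣ u n - x0 := by
    intro n
    induction n with
    | zero => simpa [u] using h0
    | succ n ih => exact ⟨(hg n (u n) ih).1, (hg n (u n) ih).2.1⟩
  exact ⟨u, fun n => ⟨(hu n).1, (hg n (u n) (hu n)).2.2⟩⟩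

lemma hensel [IsPrincipalIdealRing (𝓞 K)] (f : (𝓞 K)[X]) (x0 : 𝓞 K) (h0 : q ∣ f.eval x0)
    (h1 : ¬ q ∣ f.derivative.eval x0) :
    ∃ y : (primeSpec hq).adicCompletion K,
      (f.map (algebraMap (𝓞 K) ((primeSpec hq).adicCompletion K))).eval y = 0 := by
  obtain ⟨u, hu⟩ := hensel_seq hq f x0 h0 h1
  set φ := algebraMap (𝓞 K) ((primeSpec hq).adicCompletion K) with hφ
  have hle : ∀ r, ‖φ r‖ ≤ 1 := fun r => FinitePlace.norm_le_one K (primeSpec hq) r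
  have hlt : ‖φ q‖ < 1 := (FinitePlace.norm_lt_one_iff_mem K (primeSpec hq) q).mpr
    (Ideal.mem_span_singleton_self q)
  have hdv : ∀ n r, q ^ n ∣ r → ‖φ r‖ ≤ ‖φ q‖ ^ n := by
    rintro n _ ⟨s, rfl⟩
    rw [map_mul, norm_mul, map_pow, norm_pow]
    exact mul_le_of_le_one_right (by positivity) (hle s)
  have hc : CauchySeq (fun n => φ (u n)) := by
    refine cauchySeq_of_le_geometric ‖φ q‖ ‖φ q‖ hlt (fun n => ?_)
    rw [dist_comm, dist_eq_norm, ← map_sub]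
    refine (hdv _ _ (hu n).2).trans (le_of_eq (by ring))
  obtain ⟨y, hy⟩ := cauchySeq_tendsto_of_complete hc
  refine ⟨y, ?_⟩
  have t1 : Filter.Tendsto (fun n => (f.map φ).eval (φ (u n))) Filter.atTop
      (nhds ((f.map φ).eval y)) := ((f.map φ).continuous.tendsto y).comp hy
  have t2 : Filter.Tendsto (fun n => (f.map φ).eval (φ (u n))) Filter.atTop (nhds 0) := by
    refine squeeze_zero_norm (a := fun n => ‖φ q‖ ^ n) (fun n => ?_)
      (tendsto_pow_atTop_nhds_zero_of_lt_one (norm_nonneg _) hlt)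
    rw [eval_map_apply]
    exact hdv _ _ ((pow_dvd_pow q (Nat.le_succ n)).trans (hu n).1)
  exact tendsto_nhds_unique t1 t2

lemma cube_of_mod [IsPrincipalIdealRing (𝓞 K)] (h3 : ¬ q ∣ 3) (a x0 : 𝓞 K) (ha : ¬ q ∣ a)
    (h : q ∣ x0 ^ 3 - a) :
    ∃ y : (primeSpec hq).adicCompletion K, y ^ 3 = algebraMap (𝓞 K) _ a := by
  obtain ⟨y, hy⟩ := hensel hq (X ^ 3 - C a) x0 (by simpa using h) (by
    simp only [derivative_sub, derivative_X_pow, derivative_C, eval_sub, eval_mul, eval_pow, eval_X,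
      eval_C, eval_zero, sub_zero]
    intro hd
    have hx : q ∣ x0 := by
      rcases hq.dvd_or_dvd hd with h' | h'
      · exact absurd (by simpa using h') h3
      · exact hq.dvd_of_dvd_pow h'
    apply ha
    have := dvd_sub (dvd_pow hx three_ne_zero) h
    rwa [sub_sub_cancel] at this)
  refine ⟨y, ?_⟩
  simpa [sub_eq_zero] using hy

lemma cube_of_nine [IsPrincipalIdealRing (𝓞 K)] (h3 : q ∣ 3) (s : 𝓞 K) :
    ∃ y : (primeSpec hq).adicCompletion K, y ^ 3 = algebraMap (𝓞 K) _ (1 + 9 * s) := by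
  obtain ⟨y, hy⟩ := hensel hq (C 3 * X ^ 3 + C 3 * X ^ 2 + X - C s) s (by
    simp only [eval_sub, eval_add, eval_mul, eval_C, eval_pow, eval_X]
    have : (3 : 𝓞 K) * s ^ 3 + 3 * s ^ 2 + s - s = 3 * (s ^ 3 + s ^ 2) := by ring
    rw [this]; exact dvd_mul_of_dvd_left h3 _) (by
    simp only [derivative_sub, derivative_add, derivative_C_mul, derivative_X_pow, derivative_C,
      derivative_X, eval_sub, eval_add, eval_mul, eval_pow, eval_X,
      eval_C, eval_zero, sub_zero, eval_one]
    intro hd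
    have h2 := dvd_sub hd (dvd_mul_of_dvd_left h3 (3 * s ^ 2 + 2 * s))
    apply hq.not_isUnit
    apply isUnit_of_dvd_one
    convert h2 using 1
    push_cast
    ring)
  refine ⟨1 + 3 * y, ?_⟩
  simp only [Polynomial.map_sub, Polynomial.map_add, Polynomial.map_mul, map_C, Polynomial.map_pow,
    map_X, eval_sub, eval_add, eval_mul, eval_C, eval_pow, eval_X, map_ofNat, Polynomial.map_ofNat, eval_ofNat] at hy
  simp only [map_add, map_mul, map_one, map_ofNat]
  linear_combination 9 * hy
end hens

section ff
variable {F : Type*} [Field F] [Finite F]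

lemma ff_gen (F : Type*) [Field F] [Finite F] : ∃ g : F, g ≠ 0 ∧ ∀ a : F, a ≠ 0 →
    ∃ u : F, u ≠ 0 ∧ (a = u ^ 3 ∨ a = g * u ^ 3 ∨ a = g ^ 2 * u ^ 3) := by
  obtain ⟨g, hg⟩ := IsCyclic.exists_generator (α := Fˣ)
  refine ⟨g, g.ne_zero, fun a ha => ?_⟩
  obtain ⟨k, hk⟩ := Subgroup.mem_zpowers_iff.mp (hg (Units.mk0 a ha))
  have hk' : a = ((g ^ k : Fˣ) : F) := by rw [hk]; rfl
  refine ⟨((g ^ (k / 3) : Fˣ) : F), Units.ne_zero _, ?_⟩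
  have h3 : k % 3 = 0 ∨ k % 3 = 1 ∨ k % 3 = 2 := by omega
  rw [hk']
  rcases h3 with h | h | h
  · left
    rw [← Units.val_pow_eq_pow_val, ← zpow_natCast, ← zpow_mul]
    congr 2; push_cast; omega
  · right; left
    rw [← Units.val_pow_eq_pow_val, ← zpow_natCast, ← zpow_mul, ← Units.val_mul, ← zpow_one_add]
    congr 2; push_cast; omega
  · right; right
    rw [← Units.val_pow_eq_pow_val, ← Units.val_pow_eq_pow_val, ← zpow_natCast, ← zpow_natCast,
      ← zpow_mul, ← Units.val_mul, ← zpow_add]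
    congr 2; push_cast; omega

lemma ff_core (g : F) (hg : g ≠ 0) (H : ∀ a : F, a ≠ 0 →
    ∃ u : F, u ≠ 0 ∧ (a = u ^ 3 ∨ a = g * u ^ 3 ∨ a = g ^ 2 * u ^ 3)) :
    ∃ x y z : F, ¬(x = 0 ∧ y = 0 ∧ z = 0) ∧ x ^ 3 + g * y ^ 3 + g ^ 2 * z ^ 3 = 0 := by
  classical
  by_contra hno
  have no : ∀ x y z : F, x ^ 3 + g * y ^ 3 + g ^ 2 * z ^ 3 = 0 → x = 0 ∧ y = 0 ∧ z = 0 := by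
    intro x y z h
    by_contra h'
    exact hno ⟨x, y, z, h', h⟩
  let C := {c : F // ∃ u : F, u ≠ 0 ∧ c = u ^ 3}
  have dich : ∀ c : C, (∃ w : F, w ≠ 0 ∧ 1 + g * c.1 = w ^ 3) ∨
      (∃ w : F, w ≠ 0 ∧ 1 + g * c.1 = g * w ^ 3) := by
    rintro ⟨_, u, hu, rfl⟩
    have h0 : 1 + g * u ^ 3 ≠ 0 := by
      intro h
      have := no 1 u 0 (by linear_combination h)
      exact one_ne_zero this.1
    obtain ⟨w, hw, h | h | h⟩ := H _ h0
    · exact Or.inl ⟨w, hw, h⟩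
    · exact Or.inr ⟨w, hw, h⟩
    · have := no 1 u (-w) (by linear_combination h)
      exact absurd this.1 one_ne_zero
  have hf : ∀ c : C, ∃ d : C, ((d : F) = -1 - g * c.1 ∨ (d : F) * (g * c.1) = -(1 + g * c.1)) := by
    intro c
    rcases dich c with ⟨w, hw, h⟩ | ⟨w, hw, h⟩
    · exact ⟨⟨-1 - g * c.1, -w, neg_ne_zero.mpr hw, by linear_combination -h⟩, Or.inl rfl⟩
    · obtain ⟨_, u, hu, rfl⟩ := c
      refine ⟨⟨(-w / u) ^ 3, -w / u, div_ne_zero (neg_ne_zero.mpr hw) hu, rfl⟩, Or.inr ?_⟩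
      simp only at h ⊢
      field_simp
      linear_combination h
  choose f hf using hf
  have hfin : Finite C := Subtype.finite
  have inj : Function.Injective f := by
    intro c d hcd
    have h1 := hf c
    have h2 := hf d
    rw [hcd] at h1
    obtain ⟨_, u, hu, rfl⟩ := c
    obtain ⟨_, v, hv, rfl⟩ := d
    apply Subtype.ext
    simp only at h1 h2 ⊢
    have key : ∀ u v : F, u ≠ 0 → v ≠ 0 → (-1 - g * u ^ 3) * (g * v ^ 3) = -(1 + g * v ^ 3) →
        False := by
      intro u v hu hv h
      have := no (-1) 0 (u * v) (by linear_combination -h)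
      exact (neg_ne_zero.mpr one_ne_zero) this.1
    rcases h1 with h1 | h1 <;> rcases h2 with h2 | h2
    · rw [h1] at h2
      exact mul_left_cancel₀ hg (by linear_combination -h2)
    · rw [h1] at h2
      exact (key u v hu hv h2).elim
    · rw [h2] at h1
      exact (key v u hv hu h1).elim
    · set D := (f ⟨v ^ 3, v, hv, rfl⟩ : F)
      have hD : (D + 1) * (g * (u ^ 3 - v ^ 3)) = 0 := by linear_combination h1 - h2
      rcases mul_eq_zero.mp hD with h | h
      · exfalso
        have : D = -1 := by linear_combination h
        rw [this] at h1
        exact one_ne_zero (α := F) (by linear_combination h1)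
      · rcases mul_eq_zero.mp h with h | h
        · exact absurd h hg
        · linear_combination h
  obtain ⟨c, hc⟩ := (Finite.injective_iff_surjective.mp inj) ⟨-1, -1, neg_ne_zero.mpr one_ne_zero, by ring⟩
  have h := hf c
  rw [hc] at h
  obtain ⟨_, u, hu, rfl⟩ := c
  simp only at h
  rcases h with h | h
  · have : g * u ^ 3 = 0 := by linear_combination h
    exact (mul_ne_zero hg (pow_ne_zero 3 hu)) this
  · exact one_ne_zero (α := F) (by linear_combination h)

lemma ff_sol (a b c : F) (ha : a ≠ 0) (hb : b ≠ 0) (hc : c ≠ 0) :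
    ∃ x y z : F, ¬(x = 0 ∧ y = 0 ∧ z = 0) ∧ a * x ^ 3 + b * y ^ 3 = c * z ^ 3 := by
  obtain ⟨g, hg, H⟩ := ff_gen F
  obtain ⟨X, Y, Z, hn, h⟩ := ff_core g hg H
  obtain ⟨u, hu, ha'⟩ := H a ha
  obtain ⟨v, hv, hb'⟩ := H b hb
  obtain ⟨w, hw, hc'⟩ := H c hc
  have key : ∀ S T W : F, ¬(S = 0 ∧ T = 0 ∧ W = 0) →
      ¬(S * (v * w) = 0 ∧ T * (u * w) = 0 ∧ -W * (u * v) = 0) := by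
    intro S T W h
    simpa [hu, hv, hw] using h
  rcases ha' with rfl | rfl | rfl <;> rcases hb' with rfl | rfl | rfl <;>
    rcases hc' with rfl | rfl | rfl
  all_goals first
    | (refine ⟨v, -u, 0, fun h => hv h.1, ?_⟩; ring1)
    | (refine ⟨w, 0, u, fun h => hw h.1, ?_⟩; ring1)
    | (refine ⟨0, w, v, fun h => hw h.2.1, ?_⟩; ring1)
    | (refine ⟨_, _, _, key X Y Z (by tauto), ?_⟩; linear_combination (u * v * w) ^ 3 * h)
    | (refine ⟨_, _, _, key X Z Y (by tauto), ?_⟩; linear_combination (u * v * w) ^ 3 * h)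
    | (refine ⟨_, _, _, key Y X Z (by tauto), ?_⟩; linear_combination (u * v * w) ^ 3 * h)
    | (refine ⟨_, _, _, key Y Z X (by tauto), ?_⟩; linear_combination (u * v * w) ^ 3 * h)
    | (refine ⟨_, _, _, key Z X Y (by tauto), ?_⟩; linear_combination (u * v * w) ^ 3 * h)
    | (refine ⟨_, _, _, key Z Y X (by tauto), ?_⟩; linear_combination (u * v * w) ^ 3 * h)
end ff

section back
variable {K : Type*} [Field K] [NumberField K] {q : 𝓞 K} (hq : Prime q)
open HeightOneSpectrum Polynomial

lemma aM_inj : Function.Injective (algebraMap (𝓞 K) ((primeSpec hq).adicCompletion K)) := by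
  rw [IsScalarTower.algebraMap_eq (𝓞 K) K]
  exact (algebraMap K _).injective.comp (FaithfulSMul.algebraMap_injective (𝓞 K) K)

lemma hensel_cube [IsPrincipalIdealRing (𝓞 K)] (h3 : ¬ q ∣ 3) (a d x0 : 𝓞 K) (ha : ¬ q ∣ a)
    (hx : ¬ q ∣ x0) (h : q ∣ a * x0 ^ 3 - d) :
    ∃ y : (primeSpec hq).adicCompletion K, (y = 0 → d = 0) ∧
      algebraMap (𝓞 K) _ a * y ^ 3 = algebraMap (𝓞 K) _ d := by
  obtain ⟨y, hy⟩ := hensel hq (C a * X ^ 3 - C d) x0 (by simpa using h) (by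
    simp only [derivative_sub, derivative_C_mul, derivative_X_pow, derivative_C, eval_mul, eval_pow,
      eval_X, eval_C, sub_zero]
    intro hd
    rcases hq.dvd_or_dvd hd with h' | h'
    · exact ha h'
    · rcases hq.dvd_or_dvd h' with h' | h'
      · exact h3 (by simpa using h')
      · exact hx (hq.dvd_of_dvd_pow h'))
  have hy' : algebraMap (𝓞 K) _ a * y ^ 3 = algebraMap (𝓞 K) _ d := by
    simpa [sub_eq_zero] using hy
  refine ⟨y, ?_, hy'⟩
  rintro rfl
  apply aM_inj hq
  rw [← hy']
  simp

lemma good_prime [IsPrincipalIdealRing (𝓞 K)] (h3 : ¬ q ∣ 3) (a b c : 𝓞 K) (ha : ¬ q ∣ a)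
    (hb : ¬ q ∣ b) (hc : ¬ q ∣ c) :
    ∃ x y z : (primeSpec hq).adicCompletion K, ¬(x = 0 ∧ y = 0 ∧ z = 0) ∧
      algebraMap (𝓞 K) _ a * x ^ 3 + algebraMap (𝓞 K) _ b * y ^ 3 =
        algebraMap (𝓞 K) _ c * z ^ 3 := by
  let I := Ideal.span {q}
  have hI0 : I ≠ ⊥ := by simpa [I, Ideal.span_singleton_eq_bot] using hq.ne_zero
  have hIp : I.IsPrime := (Ideal.span_singleton_prime hq.ne_zero).mpr hq
  have hIm : I.IsMaximal := hIp.isMaximal hI0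
  let _ : Field (𝓞 K ⧸ I) := Ideal.Quotient.field I
  have : Finite (𝓞 K ⧸ I) := Ideal.finiteQuotientOfFreeOfNeBot I hI0
  have hz : ∀ r : 𝓞 K, Ideal.Quotient.mk I r = 0 ↔ q ∣ r := fun r => by
    rw [Ideal.Quotient.eq_zero_iff_mem, Ideal.mem_span_singleton]
  obtain ⟨x, y, z, hn, h⟩ := ff_sol (Ideal.Quotient.mk I a) (Ideal.Quotient.mk I b)
    (Ideal.Quotient.mk I c) (by rwa [Ne, hz]) (by rwa [Ne, hz]) (by rwa [Ne, hz])
  obtain ⟨x, rfl⟩ := Ideal.Quotient.mk_surjective x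
  obtain ⟨y, rfl⟩ := Ideal.Quotient.mk_surjective y
  obtain ⟨z, rfl⟩ := Ideal.Quotient.mk_surjective z
  rw [hz, hz, hz] at hn
  rw [← sub_eq_zero] at h
  simp only [← map_mul, ← map_pow, ← map_add, ← map_sub] at h
  rw [hz] at h
  by_cases hx : q ∣ x
  · by_cases hy : q ∣ y
    · have hzz : ¬ q ∣ z := fun hzz => hn ⟨hx, hy, hzz⟩
      obtain ⟨t, ht0, ht⟩ := hensel_cube hq h3 c (a * x ^ 3 + b * y ^ 3) z hc hzz (by
        rw [← dvd_neg]; convert h using 1; ring)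
      refine ⟨algebraMap _ _ x, algebraMap _ _ y, t, ?_, ?_⟩
      · rintro ⟨_, _, h0⟩
        rw [ht0 h0, zero_sub, dvd_neg] at h
        rcases hq.dvd_or_dvd h with h | h
        · exact hc h
        · exact hzz (hq.dvd_of_dvd_pow h)
      · rw [ht]; simp
    · obtain ⟨t, ht0, ht⟩ := hensel_cube hq h3 b (c * z ^ 3 - a * x ^ 3) y hb hy (by
        convert h using 1; ring)
      refine ⟨algebraMap _ _ x, t, algebraMap _ _ z, ?_, ?_⟩
      · rintro ⟨_, h0, _⟩
        have e : a * x ^ 3 + b * y ^ 3 - c * z ^ 3 = b * y ^ 3 := by linear_combination -(ht0 h0)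
        rw [e] at h
        rcases hq.dvd_or_dvd h with h | h
        · exact hb h
        · exact hy (hq.dvd_of_dvd_pow h)
      · rw [ht]; simp
  · obtain ⟨t, ht0, ht⟩ := hensel_cube hq h3 a (c * z ^ 3 - b * y ^ 3) x ha hx (by
        convert h using 1; ring)
    refine ⟨t, algebraMap _ _ y, algebraMap _ _ z, ?_, ?_⟩
    · rintro ⟨h0, _, _⟩
      have e : a * x ^ 3 + b * y ^ 3 - c * z ^ 3 = a * x ^ 3 := by linear_combination -(ht0 h0)
      rw [e] at h
      rcases hq.dvd_or_dvd h with h | h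
      · exact ha h
      · exact hx (hq.dvd_of_dvd_pow h)
    · rw [ht]; simp

lemma pt_of_class {L : Type*} [Field L] (A B g a : L) (hA : A ≠ 0) (hB : B ≠ 0) (hg : g ≠ 0)
    (m n : ℤ) (ha : a = A ^ m * B ^ n * g ^ 3) (j : ℕ) (s : L) (hs : B = A ^ j * s ^ 3) :
    ∃ x y z : L, ¬(x = 0 ∧ y = 0 ∧ z = 0) ∧ a * x ^ 3 + a⁻¹ * y ^ 3 = A * z ^ 3 := by
  have hs0 : s ≠ 0 := by
    rintro rfl
    apply hB; rw [hs]; ring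
  obtain ⟨l, r, hr, hk⟩ : ∃ (l : ℤ) (r : ℕ), r < 3 ∧ m + j * n = 3 * l + r :=
    ⟨(m + j * n) / 3, ((m + j * n) % 3).toNat, by omega, by omega⟩
  have ha' : a = A ^ r * (A ^ l * s ^ n * g) ^ 3 := by
    have e : A ^ m * A ^ ((j : ℤ) * n) = A ^ (3 * l) * A ^ (r : ℤ) := by
      rw [← zpow_add₀ hA, hk, zpow_add₀ hA]
    have e1 : (A ^ j * s ^ 3) ^ n = A ^ ((j : ℤ) * n) * (s ^ n) ^ 3 := by
      rw [mul_zpow, zpow_mul, zpow_natCast]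
      congr 1
      rw [← zpow_natCast, ← zpow_natCast, ← zpow_mul, ← zpow_mul, mul_comm]
    have e2 : A ^ (3 * l) = (A ^ l) ^ 3 := by
      rw [mul_comm, zpow_mul]; norm_cast
    rw [ha, hs, e1]
    rw [e2, zpow_natCast] at e
    linear_combination (s ^ n) ^ 3 * g ^ 3 * e
  set t := A ^ l * s ^ n * g
  have ht : t ≠ 0 := mul_ne_zero (mul_ne_zero (zpow_ne_zero _ hA) (zpow_ne_zero _ hs0)) hg
  interval_cases r
  · refine ⟨1, -t ^ 2, 0, fun h => one_ne_zero h.1, ?_⟩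
    rw [ha']; field_simp; ring
  · refine ⟨1, 0, t, fun h => one_ne_zero h.1, ?_⟩
    rw [ha']; ring
  · refine ⟨0, A * t, 1, fun h => one_ne_zero h.2.2, ?_⟩
    rw [ha']; field_simp; ring

lemma cube_mod_p {p n : ℕ} (hp : p.Prime) (hp2 : p % 3 = 2) (hn : ¬ p ∣ n) :
    ∃ m : ℕ, (p : ℤ) ∣ (m : ℤ) ^ 3 - n := by
  have := Fact.mk hp
  refine ⟨n ^ ((2 * p - 1) / 3), ?_⟩
  rw [← ZMod.intCast_zmod_eq_zero_iff_dvd]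
  push_cast
  rw [← pow_mul, sub_eq_zero]
  have e : (2 * p - 1) / 3 * 3 = (p - 1) * 2 + 1 := by have := hp.two_le; omega
  rw [e, pow_succ, pow_mul, ZMod.pow_card_sub_one_eq_one, one_pow, one_mul]
  rwa [Ne, ZMod.natCast_eq_zero_iff]

lemma not_dvd_nat {q : 𝓞 K} (hq : Prime q) {p n : ℕ} (hp : p.Prime) (hqp : q ∣ (p : 𝓞 K)) (hn : ¬ p ∣ n) :
    ¬ q ∣ (n : 𝓞 K) := by
  intro h
  have hc : IsCoprime (p : ℤ) (n : ℤ) := by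
    rw [Nat.isCoprime_iff_coprime]; exact (Nat.Prime.coprime_iff_not_dvd hp).mpr hn
  obtain ⟨a, b, hab⟩ := hc
  have hab' : (a : 𝓞 K) * p + b * n = 1 := by exact_mod_cast congrArg (Int.cast : ℤ → 𝓞 K) hab
  apply hq.not_isUnit
  apply isUnit_of_dvd_one
  rw [← hab']
  exact dvd_add (dvd_mul_of_dvd_right hqp _) (dvd_mul_of_dvd_right h _)

lemma nat_cube [IsPrincipalIdealRing (𝓞 K)] {p n : ℕ} (hp : p.Prime) (hp2 : p % 3 = 2)
    (hqp : q ∣ (p : 𝓞 K)) (hn : ¬ p ∣ n) :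
    ∃ y : (primeSpec hq).adicCompletion K, y ^ 3 = (n : (primeSpec hq).adicCompletion K) := by
  obtain ⟨m, hm⟩ := cube_mod_p hp hp2 hn
  have h3 : ¬ q ∣ 3 := by
    have := not_dvd_nat hq hp hqp (n := 3) (by
      intro h
      rcases (Nat.dvd_prime Nat.prime_three).mp h with h | h
      · exact hp.one_lt.ne' h
      · omega)
    exact_mod_cast this
  obtain ⟨y, hy⟩ := cube_of_mod hq h3 (n : 𝓞 K) (m : 𝓞 K) (not_dvd_nat hq hp hqp hn) (by
    obtain ⟨c, hc⟩ := hm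
    refine hqp.trans ⟨(c : 𝓞 K), ?_⟩
    exact_mod_cast congrArg (Int.cast : ℤ → 𝓞 K) hc)
  exact ⟨y, by rw [hy, map_natCast]⟩

lemma backward [IsPrincipalIdealRing (𝓞 K)]
    (p₁ p₂ p₃ : ℕ) (hp₁ : p₁.Prime) (hp₂ : p₂.Prime) (hp₃ : p₃.Prime)
    (hne₁₂ : p₁ ≠ p₂) (hne₂₃ : p₂ ≠ p₃) (hne₁₃ : p₁ ≠ p₃)
    (hmod : (p₁ % 9 = 2 ∧ p₂ % 9 = 2 ∧ p₃ % 9 = 5) ∨ (p₁ % 9 = 5 ∧ p₂ % 9 = 5 ∧ p₃ % 9 = 2))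
    (α : K) (hα : α ≠ 0) (m n : ℤ) (γ : K)
    (hc : α = ((p₁ * p₂ * p₃ ^ 2 : ℕ) : K) ^ m * ((p₁ * p₂ ^ 2 : ℕ) : K) ^ n * γ ^ 3) :
    ∃ x y z : (primeSpec hq).adicCompletion K,
          ¬(x = 0 ∧ y = 0 ∧ z = 0) ∧
          algebraMap K ((primeSpec hq).adicCompletion K) α * x ^ 3
            + algebraMap K ((primeSpec hq).adicCompletion K) α⁻¹ * y ^ 3
            = algebraMap K ((primeSpec hq).adicCompletion K)
                ((p₁ * p₂ * p₃ ^ 2 : ℕ) : K) * z ^ 3 := by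
  have hγ : γ ≠ 0 := by
    rintro rfl
    apply hα; rw [hc]; ring
  have h1 := hp₁.ne_zero
  have h2 := hp₂.ne_zero
  have h3 := hp₃.ne_zero
  have n12 : ¬ p₁ ∣ p₂ := fun h => hne₁₂ ((Nat.prime_dvd_prime_iff_eq hp₁ hp₂).mp h)
  have n21 : ¬ p₂ ∣ p₁ := fun h => hne₁₂ ((Nat.prime_dvd_prime_iff_eq hp₂ hp₁).mp h).symm
  have n13 : ¬ p₁ ∣ p₃ := fun h => hne₁₃ ((Nat.prime_dvd_prime_iff_eq hp₁ hp₃).mp h)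
  have n31 : ¬ p₃ ∣ p₁ := fun h => hne₁₃ ((Nat.prime_dvd_prime_iff_eq hp₃ hp₁).mp h).symm
  have n23 : ¬ p₂ ∣ p₃ := fun h => hne₂₃ ((Nat.prime_dvd_prime_iff_eq hp₂ hp₃).mp h)
  have n32 : ¬ p₃ ∣ p₂ := fun h => hne₂₃ ((Nat.prime_dvd_prime_iff_eq hp₃ hp₂).mp h).symm
  have : CharZero ((primeSpec hq).adicCompletion K) :=
    charZero_of_injective_algebraMap (algebraMap K ((primeSpec hq).adicCompletion K)).injective
  have z1 : ((p₁ : ℕ) : (primeSpec hq).adicCompletion K) ≠ 0 := Nat.cast_ne_zero.mpr h1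
  have z2 : ((p₂ : ℕ) : (primeSpec hq).adicCompletion K) ≠ 0 := Nat.cast_ne_zero.mpr h2
  have z3 : ((p₃ : ℕ) : (primeSpec hq).adicCompletion K) ≠ 0 := Nat.cast_ne_zero.mpr h3
  have hA0 : p₁ * p₂ * p₃ ^ 2 ≠ 0 := by positivity
  have hB0 : p₁ * p₂ ^ 2 ≠ 0 := by positivity
  rw [map_inv₀, map_natCast]
  have hγ' : algebraMap K ((primeSpec hq).adicCompletion K) γ ≠ 0 := by simpa using hγ
  have hc' := congrArg (algebraMap K ((primeSpec hq).adicCompletion K)) hc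
  rw [map_mul, map_mul, map_zpow₀, map_zpow₀, map_natCast, map_natCast, map_pow] at hc'
  have main := pt_of_class _ _ _ _ (Nat.cast_ne_zero.mpr hA0) (Nat.cast_ne_zero.mpr hB0) hγ' m n hc'
  by_cases q3 : q ∣ 3
  · obtain ⟨t, ht⟩ := cube_of_nine hq q3 ((-((p₁ * p₂ ^ 2 / 9 : ℕ) : 𝓞 K) - 1))
    refine main 0 (-t) ?_
    have e : 9 * (p₁ * p₂ ^ 2 / 9) + 8 = p₁ * p₂ ^ 2 := by
      have : p₁ * p₂ ^ 2 % 9 = 8 := by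
        rcases hmod with ⟨a, b, _⟩ | ⟨a, b, _⟩ <;> simp [Nat.mul_mod, Nat.pow_mod, a, b]
      omega
    have e' : (p₁ * p₂ ^ 2 : ℕ) = 9 * ((p₁ * p₂ ^ 2 / 9 : ℕ) : (primeSpec hq).adicCompletion K) + 8 := by
      exact_mod_cast e.symm
    rw [e', pow_zero, one_mul, neg_pow, ht]
    simp only [map_add, map_sub, map_mul, map_neg, map_natCast, map_ofNat, map_one]
    ring
  by_cases q1 : q ∣ (p₁ : 𝓞 K)
  · obtain ⟨s, hs⟩ := nat_cube hq hp₁ (by omega) q1 n12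
    obtain ⟨t, ht⟩ := nat_cube hq hp₁ (by omega) q1 n13
    refine main 1 (s / t ^ 2) ?_
    have ht0 : t ≠ 0 := by
      rintro rfl
      exact z3 (by rw [← ht]; ring)
    push_cast
    rw [← hs, ← ht]
    field_simp
  by_cases q2 : q ∣ (p₂ : 𝓞 K)
  · obtain ⟨s, hs⟩ := nat_cube hq hp₂ (by omega) q2 n21
    obtain ⟨t, ht⟩ := nat_cube hq hp₂ (by omega) q2 n23
    refine main 2 (1 / (s * t ^ 4)) ?_
    have hs0 : s ≠ 0 := by
      rintro rfl
      exact z1 (by rw [← hs]; ring)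
    have ht0 : t ≠ 0 := by
      rintro rfl
      exact z3 (by rw [← ht]; ring)
    push_cast
    rw [← hs, ← ht]
    field_simp
  by_cases q3 : q ∣ (p₃ : 𝓞 K)
  · obtain ⟨s, hs⟩ := nat_cube hq hp₃ (by omega) q3 n31
    obtain ⟨t, ht⟩ := nat_cube hq hp₃ (by omega) q3 n32
    refine main 0 (s * t ^ 2) ?_
    push_cast
    rw [← hs, ← ht]
    ring
  have qA : ¬ q ∣ ((p₁ * p₂ * p₃ ^ 2 : ℕ) : 𝓞 K) := by
    push_cast
    intro h
    rcases hq.dvd_or_dvd h with h | h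
    · rcases hq.dvd_or_dvd h with h | h
      · exact q1 h
      · exact q2 h
    · exact q3 (hq.dvd_of_dvd_pow h)
  have qB : ¬ q ∣ ((p₁ * p₂ ^ 2 : ℕ) : 𝓞 K) := by
    push_cast
    intro h
    rcases hq.dvd_or_dvd h with h | h
    · exact q1 h
    · exact q2 (hq.dvd_of_dvd_pow h)
  clear main
  generalize p₁ * p₂ * p₃ ^ 2 = A at *
  generalize p₁ * p₂ ^ 2 = B at *
  generalize algebraMap K ((primeSpec hq).adicCompletion K) γ = g at *
  generalize algebraMap K ((primeSpec hq).adicCompletion K) α = a at *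
  obtain ⟨l, r, hr⟩ : ∃ (l : ℤ) (r : ℕ), m = r + 3 * l :=
    ⟨m / 3, (m % 3).toNat, by omega⟩
  obtain ⟨l', r', hr'⟩ : ∃ (l : ℤ) (r : ℕ), n = r + 3 * l :=
    ⟨n / 3, (n % 3).toNat, by omega⟩
  have zA : ((A : ℕ) : (primeSpec hq).adicCompletion K) ≠ 0 := Nat.cast_ne_zero.mpr hA0
  have zB : ((B : ℕ) : (primeSpec hq).adicCompletion K) ≠ 0 := Nat.cast_ne_zero.mpr hB0
  have ha : a = ((A ^ r * B ^ r' : ℕ) : (primeSpec hq).adicCompletion K) *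
      ((A : (primeSpec hq).adicCompletion K) ^ l * (B : (primeSpec hq).adicCompletion K) ^ l' * g) ^ 3 := by
    have e2 : ∀ (A : (primeSpec hq).adicCompletion K) (l : ℤ), A ^ (3 * l) = (A ^ l) ^ 3 := by
      intro A l
      rw [mul_comm, zpow_mul]; norm_cast
    rw [hc', hr, hr', zpow_add₀ zA, zpow_add₀ zB, e2, e2, zpow_natCast, zpow_natCast]
    push_cast
    ring
  have qN : ¬ q ∣ ((A ^ r * B ^ r' : ℕ) : 𝓞 K) := by
    push_cast
    intro h
    rcases hq.dvd_or_dvd h with h | h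
    · exact qA (hq.dvd_of_dvd_pow h)
    · exact qB (hq.dvd_of_dvd_pow h)
  have hN0 : A ^ r * B ^ r' ≠ 0 := by positivity
  have hd0 := mul_ne_zero (mul_ne_zero (zpow_ne_zero l zA) (zpow_ne_zero l' zB)) hγ'
  generalize (A : (primeSpec hq).adicCompletion K) ^ l * (B : (primeSpec hq).adicCompletion K) ^ l' * g = d at *
  generalize A ^ r * B ^ r' = N at *
  have zN : ((N : ℕ) : (primeSpec hq).adicCompletion K) ≠ 0 := Nat.cast_ne_zero.mpr hN0
  obtain ⟨x, y, z, hn, h⟩ := good_prime hq ‹_› ((N : 𝓞 K) ^ 2) 1 (N * A)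
    (fun h => qN (hq.dvd_of_dvd_pow h)) (fun h => hq.not_isUnit (isUnit_of_dvd_one h))
    (fun h => (hq.dvd_or_dvd h).elim qN qA)
  refine ⟨x / d, y * d, z, ?_, ?_⟩
  · simpa [hd0] using hn
  · simp only [map_mul, map_pow, map_natCast, map_one] at h
    rw [ha]
    field_simp
    linear_combination h

end back

section fw1
variable {K : Type*} [Field K] [NumberField K]

lemma fermat {q : 𝓞 K} (hq : Prime q) (w : 𝓞 K) (hw : ¬ q ∣ w) :
    q ∣ w ^ (Ideal.absNorm (Ideal.span {q}) - 1) - 1 := by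
  let I := Ideal.span {q}
  have hI0 : I ≠ ⊥ := by simpa [I, Ideal.span_singleton_eq_bot] using hq.ne_zero
  have hIp : I.IsPrime := (Ideal.span_singleton_prime hq.ne_zero).mpr hq
  have hIm : I.IsMaximal := hIp.isMaximal hI0
  let _ : Field (𝓞 K ⧸ I) := Ideal.Quotient.field I
  have : Finite (𝓞 K ⧸ I) := Ideal.finiteQuotientOfFreeOfNeBot I hI0
  have hz : ∀ r : 𝓞 K, Ideal.Quotient.mk I r = 0 ↔ q ∣ r := fun r => by
    rw [Ideal.Quotient.eq_zero_iff_mem, Ideal.mem_span_singleton]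
  rw [← hz, map_sub, map_pow, map_one, sub_eq_zero, Ideal.absNorm_apply, Submodule.cardQuot_apply]
  let _ := Fintype.ofFinite (𝓞 K ⧸ I)
  rw [Nat.card_eq_fintype_card]
  exact FiniteField.pow_card_sub_one_eq_one _ (by rwa [Ne, hz])

variable [IsCyclotomicExtension {3} ℚ K]

lemma absNorm_nat (p : ℕ) : Ideal.absNorm (Ideal.span {(p : 𝓞 K)}) = p ^ 2 := by
  have h : Algebra.norm ℤ (p : 𝓞 K) = (p : ℤ) ^ 2 := by
    have := Algebra.norm_algebraMap (S := 𝓞 K) (p : ℤ)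
    rw [RingOfIntegers.rank, IsCyclotomicExtension.finrank (n := 3) K
      (Polynomial.cyclotomic.irreducible_rat (by norm_num)),
      Nat.totient_prime Nat.prime_three] at this
    simpa using this
  rw [Ideal.absNorm_span_singleton, h, Int.natAbs_pow, Int.natAbs_natCast]

lemma ex_eta : ∃ e : 𝓞 K, e ^ 3 = 1 ∧ e ^ 2 + e + 1 = 0 ∧ e - 1 ∣ 3 ∧ Prime (e - 1) ∧
    (∀ u : 𝓞 K, IsUnit u → u ^ 2 = 1 ∨ u ^ 2 = e ∨ u ^ 2 = e ^ 2) ∧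
    (∀ n : ℤ, e - 1 ∣ (n : 𝓞 K) → 3 ∣ n) ∧
    (∀ x : 𝓞 K, ¬ e - 1 ∣ x → (e - 1) ^ 4 ∣ x ^ 3 - 1 ∨ (e - 1) ^ 4 ∣ x ^ 3 + 1) := by
  have hζ := IsCyclotomicExtension.zeta_spec 3 ℚ K
  have : Fact (Nat.Prime 3) := ⟨Nat.prime_three⟩
  refine ⟨hζ.toInteger, hζ.toInteger_cube_eq_one,
    IsCyclotomicExtension.Rat.Three.eta_sq_add_eta_add_one hζ, ?_, hζ.zeta_sub_one_prime', ?_, ?_, ?_⟩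
  · exact_mod_cast hζ.toInteger_sub_one_dvd_prime'
  · rintro _ ⟨u, rfl⟩
    have h3 : (hζ.toInteger ^ 2) ^ 2 = hζ.toInteger := by
      linear_combination hζ.toInteger * hζ.toInteger_cube_eq_one
    have := IsCyclotomicExtension.Rat.Three.Units.mem hζ u
    simp only [List.mem_cons, List.not_mem_nil, or_false] at this
    rcases this with rfl | rfl | rfl | rfl | rfl | rfl <;> simp [h3]
  · intro n hn
    exact_mod_cast (IsCyclotomicExtension.Rat.zeta_sub_one_dvd_intCast_iff' 3 hζ).mp hn
  · intro x hx
    exact IsCyclotomicExtension.Rat.Three.lambda_pow_four_dvd_cube_sub_one_or_add_one_of_lambda_not_dvd hζ hx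

lemma pow_three_mod {R : Type*} [CommRing R] (e : R) (he : e ^ 3 = 1) (M : ℕ) (hM : M % 3 = 1) :
    e ^ M = e := by
  conv_lhs => rw [← Nat.div_add_mod M 3, hM, pow_add, pow_mul, he]
  simp

lemma three_not_dvd {q : 𝓞 K} (hq : Prime q) {p : ℕ} (hp : p.Prime) (hp2 : p % 3 = 2)
    (hqp : q ∣ (p : 𝓞 K)) : ¬ q ∣ 3 := by
  have := not_dvd_nat hq hp hqp (n := 3) (by
    intro h
    rcases (Nat.dvd_prime Nat.prime_three).mp h with h | h
    · exact hp.one_lt.ne' h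
    · omega)
  exact_mod_cast this

lemma prime_p [IsPrincipalIdealRing (𝓞 K)] {p : ℕ} (hp : p.Prime) (hp2 : p % 3 = 2) :
    Prime (p : 𝓞 K) := by
  obtain ⟨e, he3, -, he, -⟩ := ex_eta (K := K)
  have h0 : (p : 𝓞 K) ≠ 0 := Nat.cast_ne_zero.mpr hp.ne_zero
  have hone : ∀ x : 𝓞 K, Ideal.absNorm (Ideal.span {x}) = 1 → IsUnit x := by
    intro x hx
    rwa [Ideal.absNorm_eq_one_iff, Ideal.span_singleton_eq_top] at hx
  have hnu : ¬ IsUnit (p : 𝓞 K) := by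
    intro h
    rw [← Ideal.span_singleton_eq_top, ← Ideal.absNorm_eq_one_iff, absNorm_nat] at h
    have := hp.two_le
    nlinarith
  obtain ⟨q, hq, hqp⟩ := WfDvdMonoid.exists_irreducible_factor hnu h0
  replace hq := hq.prime
  have hq3 := three_not_dvd hq hp hp2 hqp
  obtain ⟨c, hc⟩ := hqp
  have hN := absNorm_nat (K := K) p
  rw [hc, ← Ideal.span_singleton_mul_span_singleton, map_mul] at hN
  obtain ⟨k, hk, hk'⟩ := (Nat.dvd_prime_pow hp).mp (Dvd.intro _ hN)
  have hf := fermat hq e (fun h => hq.not_isUnit (isUnit_of_dvd_one (he3 ▸ dvd_pow h three_ne_zero)))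
  rw [hk'] at hf
  interval_cases k
  · exact absurd (hone _ (by simpa using hk')) hq.not_isUnit
  · rw [pow_one, pow_three_mod e he3 _ (by omega)] at hf
    exact absurd (hf.trans he) hq3
  · have hc1 : IsUnit c := by
      apply hone
      rw [hk'] at hN
      have : 0 < p ^ 2 := pow_pos hp.pos 2
      exact Nat.eq_of_mul_eq_mul_left this (by rw [hN, mul_one])
    rw [hc]
    exact ((associated_mul_unit_right q c hc1).prime_iff).mp hq

lemma unit_lem [IsPrincipalIdealRing (𝓞 K)] {p : ℕ} (hp : p.Prime) (hp9 : p % 9 = 2 ∨ p % 9 = 5)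
    (u s t : 𝓞 K) (hu : IsUnit u) (n : ℕ) (hn : ¬ p ∣ n) (hst : ¬((p : 𝓞 K) ∣ s ∧ (p : 𝓞 K) ∣ t))
    (h : (p : 𝓞 K) ∣ u * n * s ^ 3 - t ^ 3) : u ^ 2 = 1 := by
  have hq := prime_p (K := K) hp (by omega)
  obtain ⟨e, he3, -, he, -, hun, -⟩ := ex_eta (K := K)
  have hq3 := three_not_dvd hq hp (by omega) dvd_rfl
  have hpn := not_dvd_nat hq hp dvd_rfl hn
  have hpu : ¬ (p : 𝓞 K) ∣ u := fun h => hq.not_isUnit (isUnit_of_dvd_unit h hu)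
  have hs : ¬ (p : 𝓞 K) ∣ s := by
    intro hs
    refine hst ⟨hs, hq.dvd_of_dvd_pow (n := 3) ?_⟩
    have := dvd_sub (dvd_mul_of_dvd_right (dvd_pow hs three_ne_zero) (u * n)) h
    rwa [sub_sub_cancel] at this
  have ht : ¬ (p : 𝓞 K) ∣ t := by
    intro ht
    have := dvd_add h (dvd_pow ht three_ne_zero)
    rw [sub_add_cancel] at this
    rcases hq.dvd_or_dvd this with h | h
    · rcases hq.dvd_or_dvd h with h | h
      · exact hpu h
      · exact hpn h
    · exact hs (hq.dvd_of_dvd_pow h)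
  let I := Ideal.span {(p : 𝓞 K)}
  have hIp : I.IsPrime := (Ideal.span_singleton_prime hq.ne_zero).mpr hq
  let f := Ideal.Quotient.mk I
  have hz : ∀ r : 𝓞 K, f r = 0 ↔ (p : 𝓞 K) ∣ r := fun r => by
    rw [Ideal.Quotient.eq_zero_iff_mem, Ideal.mem_span_singleton]
  have hdom : IsDomain (𝓞 K ⧸ I) := Ideal.Quotient.isDomain I
  obtain ⟨M, hM, hM3⟩ : ∃ M, p ^ 2 - 1 = 3 * M ∧ (M % 3 = 1 ∨ M % 3 = 2) := by
    refine ⟨(p ^ 2 - 1) / 3, ?_⟩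
    have : p ^ 2 % 9 = 4 ∨ p ^ 2 % 9 = 7 := by
      rcases hp9 with h | h <;> simp [Nat.pow_mod, h]
    omega
  have fer : ∀ w : 𝓞 K, ¬ (p : 𝓞 K) ∣ w → (f w) ^ (3 * M) = 1 := by
    intro w hw
    have := fermat hq w hw
    rw [absNorm_nat, hM, ← hz, map_sub, map_pow, map_one, sub_eq_zero] at this
    exact this
  have fn : (f (n : 𝓞 K)) ^ M = 1 := by
    have : Fact p.Prime := ⟨hp⟩
    obtain ⟨k, hk⟩ : (p - 1) ∣ M := by
      refine ⟨(p + 1) / 3, ?_⟩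
      have h1 : (p - 1) * (p + 1) = 3 * M := by
        rw [← hM, mul_comm, ← Nat.sq_sub_sq, one_pow]
      have h2 : (p + 1) / 3 * 3 = p + 1 := by omega
      have : 3 * M = 3 * ((p - 1) * ((p + 1) / 3)) := by
        rw [← h1, ← h2]
        simp; ring
      omega
    have h1 : (n : ZMod p) ^ (p - 1) = 1 := ZMod.pow_card_sub_one_eq_one (by
      rwa [Ne, ZMod.natCast_eq_zero_iff])
    have h2 : (p : ℤ) ∣ (n : ℤ) ^ (p - 1) - 1 := by
      rw [← ZMod.intCast_zmod_eq_zero_iff_dvd]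
      push_cast
      rw [h1, sub_self]
    have h3 : (f (n : 𝓞 K)) ^ (p - 1) = 1 := by
      rw [← sub_eq_zero, ← map_one f, ← map_pow, ← map_sub, hz]
      obtain ⟨c, hc⟩ := h2
      exact ⟨(c : 𝓞 K), by exact_mod_cast congrArg (Int.cast : ℤ → 𝓞 K) hc⟩
    rw [hk, pow_mul, h3, one_pow]
  have hu1 : (f u) ^ M = 1 := by
    have h4 : f u * f n * (f s) ^ 3 = (f t) ^ 3 := by
      rw [← sub_eq_zero, ← map_pow, ← map_pow, ← map_mul, ← map_mul, ← map_sub, hz]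
      exact h
    have h5 := congrArg (· ^ M) h4
    simp only [mul_pow, ← pow_mul, fer s hs, fer t ht, fn, mul_one] at h5
    exact h5
  have hfe3 : (f e) ^ 3 = 1 := by rw [← map_pow, he3, map_one]
  have fe1 : f e ≠ 1 := by
    intro h
    rw [← map_one f, ← sub_eq_zero, ← map_sub, hz] at h
    exact hq3 (h.trans he)
  have feM : (f e) ^ M ≠ 1 := by
    intro h
    rcases hM3 with h3 | h3
    · rw [pow_three_mod _ hfe3 _ h3] at h
      exact fe1 h
    · apply fe1
      rw [← pow_three_mod (f e) hfe3 (2 * M) (by omega), mul_comm, pow_mul, h, one_pow]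
  have hu2 : (f (u ^ 2)) ^ M = 1 := by
    rw [map_pow, ← pow_mul, mul_comm, pow_mul, hu1, one_pow]
  rcases hun u hu with h | h | h
  · exact h
  · rw [h] at hu2
    exact absurd hu2 feM
  · rw [h] at hu2
    exfalso
    rw [map_pow, ← pow_mul] at hu2
    apply feM
    have : (f e) ^ (2 * M * 2) = (f e) ^ M := by
      rw [show 2 * M * 2 = 3 * M + M by ring, pow_add, pow_mul, hfe3, one_pow, one_mul]
    rw [← this, pow_mul, hu2, one_pow]
end fw1

section fw2
variable {R : Type*} [CommRing R] [IsDomain R]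

lemma cubefree [IsPrincipalIdealRing R] (a : R) (ha : a ≠ 0) :
    ∃ b c : R, c ≠ 0 ∧ a = b * c ^ 3 ∧ ∀ q : R, Prime q → ¬ q ^ 3 ∣ b := by
  induction a using (wellFounded_dvdNotUnit (α := R)).induction with
  | _ a ih =>
    by_cases h : ∃ q : R, Prime q ∧ q ^ 3 ∣ a
    · obtain ⟨q, hq, a', rfl⟩ := h
      have ha' : a' ≠ 0 := right_ne_zero_of_mul ha
      obtain ⟨b, c, hc, hb, hf⟩ := ih a' ⟨ha', q ^ 3, fun h => hq.not_isUnit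
        ((isUnit_pow_iff three_ne_zero).mp h), mul_comm _ _⟩ ha'
      exact ⟨b, q * c, mul_ne_zero hq.ne_zero hc, by rw [hb]; ring, hf⟩
    · push Not at h
      exact ⟨a, 1, one_ne_zero, by ring, h⟩

lemma val_lem {q : R} (hq : Prime q) (A β x y z : R) (hA : ¬ q ∣ A) (hβ : q ∣ β) (h3 : ¬ q ^ 3 ∣ β)
    (hn : ¬(q ∣ x ∧ q ∣ y ∧ q ∣ z)) (h : q ^ 5 ∣ β ^ 2 * x ^ 3 + 1 * y ^ 3 - β * A * z ^ 3) :
    False := by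
  have hq0 := hq.ne_zero
  obtain ⟨w, hw⟩ := h
  obtain ⟨b, rfl⟩ := hβ
  have hy : q ∣ y := hq.dvd_of_dvd_pow (n := 3)
    ⟨q ^ 4 * w - q * b ^ 2 * x ^ 3 + b * A * z ^ 3, by linear_combination hw⟩
  obtain ⟨y, rfl⟩ := hy
  by_cases hb : q ∣ b
  · obtain ⟨b, rfl⟩ := hb
    have hb : ¬ q ∣ b := by
      rintro ⟨c, rfl⟩
      exact h3 ⟨c, by ring⟩
    have hz : q ∣ z := by
      have : q ∣ b * A * z ^ 3 := ⟨q * b ^ 2 * x ^ 3 + y ^ 3 - q ^ 2 * w,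
        mul_left_cancel₀ (pow_ne_zero 2 hq0) (by linear_combination -hw)⟩
      rcases hq.dvd_or_dvd this with h | h
      · exact ((hq.dvd_or_dvd h).elim hb hA).elim
      · exact hq.dvd_of_dvd_pow h
    obtain ⟨z, rfl⟩ := hz
    have hy : q ∣ y := hq.dvd_of_dvd_pow (n := 3)
      ⟨q * w - b ^ 2 * x ^ 3 + q * b * A * z ^ 3,
        mul_left_cancel₀ (pow_ne_zero 3 hq0) (by linear_combination hw)⟩
    obtain ⟨y, rfl⟩ := hy
    have hx : q ∣ x := by
      have : q ∣ b ^ 2 * x ^ 3 := ⟨w - q * y ^ 3 + b * A * z ^ 3,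
        mul_left_cancel₀ (pow_ne_zero 4 hq0) (by linear_combination hw)⟩
      rcases hq.dvd_or_dvd this with h | h
      · exact (hb (hq.dvd_of_dvd_pow h)).elim
      · exact hq.dvd_of_dvd_pow h
    exact hn ⟨hx, ⟨_, rfl⟩, ⟨_, rfl⟩⟩
  · have hz : q ∣ z := by
      have : q ∣ b * A * z ^ 3 := ⟨b ^ 2 * x ^ 3 + q * y ^ 3 - q ^ 3 * w,
        mul_left_cancel₀ hq0 (by linear_combination -hw)⟩
      rcases hq.dvd_or_dvd this with h | h
      · exact ((hq.dvd_or_dvd h).elim hb hA).elim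
      · exact hq.dvd_of_dvd_pow h
    obtain ⟨z, rfl⟩ := hz
    have hx : q ∣ x := by
      have : q ∣ b ^ 2 * x ^ 3 := ⟨q ^ 2 * w - y ^ 3 + q * b * A * z ^ 3,
        mul_left_cancel₀ (pow_ne_zero 2 hq0) (by linear_combination hw)⟩
      rcases hq.dvd_or_dvd this with h | h
      · exact (hb (hq.dvd_of_dvd_pow h)).elim
      · exact hq.dvd_of_dvd_pow h
    exact hn ⟨hx, ⟨_, rfl⟩, ⟨_, rfl⟩⟩

lemma local_p {p : R} (hp : Prime p) (u b A x y z : R) (hu : ¬ p ∣ u) (hb : ¬ p ∣ b) (hA : ¬ p ∣ A)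
    (e : ℕ) (he : e < 3) (hn : ¬(p ∣ x ∧ p ∣ y ∧ p ∣ z))
    (h : p ^ 5 ∣ (u * p ^ e * b) ^ 2 * x ^ 3 + 1 * y ^ 3 - (u * p ^ e * b) * (p * A) * z ^ 3) :
    ∃ s t : R, ¬(p ∣ s ∧ p ∣ t) ∧ (p ∣ u ^ 2 * b ^ 2 * s ^ 3 - t ^ 3 ∨
      p ∣ u * (b * A ^ 2) * s ^ 3 - t ^ 3 ∨ p ∣ u * (b * A) * s ^ 3 - t ^ 3) := by
  have hp0 := hp.ne_zero
  obtain ⟨w, hw⟩ := h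
  interval_cases e
  · refine ⟨x, -y, ?_, Or.inl ⟨p ^ 4 * w + u * b * A * z ^ 3, by linear_combination hw⟩⟩
    rintro ⟨hx, hy⟩
    rw [dvd_neg] at hy
    refine hn ⟨hx, hy, ?_⟩
    obtain ⟨x, rfl⟩ := hx
    obtain ⟨y, rfl⟩ := hy
    have : p ∣ u * b * A * z ^ 3 := ⟨u ^ 2 * b ^ 2 * p * x ^ 3 + p * y ^ 3 - p ^ 3 * w,
      mul_left_cancel₀ hp0 (by linear_combination -hw)⟩
    rcases hp.dvd_or_dvd this with h | h
    · exact ((hp.dvd_or_dvd h).elim (fun h => (hp.dvd_or_dvd h).elim hu hb) hA).elim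
    · exact hp.dvd_of_dvd_pow h
  · have hy : p ∣ y := hp.dvd_of_dvd_pow (n := 3)
      ⟨p ^ 4 * w - p * (u * b) ^ 2 * x ^ 3 + u * p * b * A * z ^ 3, by linear_combination hw⟩
    refine ⟨x, A * z, ?_, Or.inr (Or.inl ?_)⟩
    · rintro ⟨hx, hz⟩
      exact hn ⟨hx, hy, (hp.dvd_or_dvd hz).resolve_left hA⟩
    · obtain ⟨y, rfl⟩ := hy
      have : p ∣ u * b * (u * b * x ^ 3 - A * z ^ 3) := ⟨p ^ 2 * w - y ^ 3,
        mul_left_cancel₀ (pow_ne_zero 2 hp0) (by linear_combination hw)⟩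
      rcases hp.dvd_or_dvd this with h | h
      · exact ((hp.dvd_or_dvd h).elim hu hb).elim
      · obtain ⟨v, hv⟩ := h
        exact ⟨v * A ^ 2, by linear_combination A ^ 2 * hv⟩
  · have hy : p ∣ y := hp.dvd_of_dvd_pow (n := 3)
      ⟨p ^ 4 * w - p ^ 3 * (u * b) ^ 2 * x ^ 3 + u * p ^ 2 * b * A * z ^ 3, by linear_combination hw⟩
    obtain ⟨y, rfl⟩ := hy
    refine ⟨z, y, ?_, Or.inr (Or.inr ⟨u ^ 2 * b ^ 2 * x ^ 3 - p * w, ?_⟩)⟩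
    · rintro ⟨hz, hy⟩
      refine hn ⟨?_, ⟨_, rfl⟩, hz⟩
      obtain ⟨z, rfl⟩ := hz
      obtain ⟨y, rfl⟩ := hy
      have : p ∣ (u * b) ^ 2 * x ^ 3 := ⟨w - p * y ^ 3 + p * u * b * A * z ^ 3,
        mul_left_cancel₀ (pow_ne_zero 4 hp0) (by linear_combination hw)⟩
      rcases hp.dvd_or_dvd this with h | h
      · exact ((hp.dvd_or_dvd (hp.dvd_of_dvd_pow h)).elim hu hb).elim
      · exact hp.dvd_of_dvd_pow h
    · apply mul_left_cancel₀ (pow_ne_zero 3 hp0)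
      linear_combination -hw

lemma fact_p [IsPrincipalIdealRing R] {p : R} (hp : Prime p) (β : R) (hβ : β ≠ 0)
    (h3 : ∀ q : R, Prime q → ¬ q ^ 3 ∣ β) :
    ∃ e b, e < 3 ∧ β = p ^ e * b ∧ b ≠ 0 ∧ ¬ p ∣ b ∧ (∀ q : R, Prime q → ¬ q ^ 3 ∣ b) := by
  obtain ⟨b, hb, hd⟩ := (FiniteMultiplicity.of_prime_left hp hβ).exists_eq_pow_mul_and_not_dvd
  refine ⟨_, b, ?_, hb, ?_, hd, ?_⟩
  · by_contra hlt
    push Not at hlt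
    exact h3 p hp ((pow_dvd_pow p hlt).trans ⟨b, hb⟩)
  · rintro rfl; simp at hd
  · intro q hq h
    exact h3 q hq (h.trans ⟨_, by rw [mul_comm]; exact hb⟩)

lemma arith9 : ∀ r a b c : ZMod 9, r * r * r * r * r * r = 1 → (a = 0 ∨ a = 1 ∨ a = -1) →
    (b = 0 ∨ b = 1 ∨ b = -1) → (c = 0 ∨ c = 1 ∨ c = -1) → ¬(a = 0 ∧ b = 0 ∧ c = 0) →
    r ^ 2 * a + b - r * c = 0 → r = 1 ∨ r = -1 := by decide

lemma lam_lem {e : R} (he : Prime (e - 1)) (h2 : e ^ 2 + e + 1 = 0)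
    (hd : ∀ n : ℤ, e - 1 ∣ (n : R) → 3 ∣ n)
    (hc : ∀ x : R, ¬ e - 1 ∣ x → (e - 1) ^ 4 ∣ x ^ 3 - 1 ∨ (e - 1) ^ 4 ∣ x ^ 3 + 1)
    (r A : ℤ) (hr : ¬ 3 ∣ r) (hA : (A : ZMod 9) = 1) (x y z : R)
    (hn : ¬(e - 1 ∣ x ∧ e - 1 ∣ y ∧ e - 1 ∣ z))
    (h : (e - 1) ^ 5 ∣ (r : R) ^ 2 * x ^ 3 + 1 * y ^ 3 - (r * A) * z ^ 3) :
    (r : ZMod 9) = 1 ∨ (r : ZMod 9) = -1 := by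
  set l := e - 1 with hl
  have hl2 : l ^ 2 = -3 * e := by rw [hl]; linear_combination h2
  have h9 : ∀ n : ℤ, l ^ 3 ∣ (n : R) → (n : ZMod 9) = 0 := by
    intro n hn
    obtain ⟨m, rfl⟩ := hd n ((dvd_pow_self l three_ne_zero).trans hn)
    have : l ∣ (m : R) := by
      have h' : l ^ 2 * l ∣ l ^ 2 * (m : R) := by
        have := Dvd.dvd.mul_left hn (-e)
        have e1 : -e * ((3 * m : ℤ) : R) = l ^ 2 * m := by rw [hl2]; push_cast; ring
        rw [e1] at this
        exact (pow_succ l 2) ▸ this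
      exact (mul_dvd_mul_iff_left (pow_ne_zero 2 he.ne_zero)).mp h'
    obtain ⟨k, rfl⟩ := hd m this
    rw [ZMod.intCast_zmod_eq_zero_iff_dvd]
    exact ⟨k, by push_cast; ring⟩
  have hex : ∀ x : R, ∃ a : ℤ, l ^ 3 ∣ x ^ 3 - a ∧
      ((a : ZMod 9) = 0 ∨ (a : ZMod 9) = 1 ∨ (a : ZMod 9) = -1) ∧ ((a : ZMod 9) = 0 → l ∣ x) := by
    intro x
    by_cases hx : l ∣ x
    · exact ⟨0, by simpa using pow_dvd_pow_of_dvd hx 3, by simp, fun _ => hx⟩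
    · rcases hc x hx with h | h
      · exact ⟨1, by simpa using (pow_dvd_pow l (by norm_num)).trans h, by simp, fun h => by
          exfalso; revert h; decide⟩
      · exact ⟨-1, by simpa using (pow_dvd_pow l (by norm_num)).trans h, by simp, fun h => by
          exfalso; revert h; decide⟩
  obtain ⟨a, ha, ha', ha0⟩ := hex x
  obtain ⟨b, hb, hb', hb0⟩ := hex y
  obtain ⟨c, hcc, hc', hc0⟩ := hex z
  have hint : l ^ 3 ∣ ((r ^ 2 * a + b - r * A * c : ℤ) : R) := by
    have h1 := (pow_dvd_pow l (show 3 ≤ 5 by norm_num)).trans h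
    have h2 := dvd_sub (dvd_sub (dvd_sub h1 (ha.mul_left ((r : R) ^ 2))) hb) (hcc.mul_left (-(r * A : R)))
    convert h2 using 1
    push_cast
    ring
  have h0 := h9 _ hint
  push_cast at h0
  rw [hA, mul_one] at h0
  refine arith9 _ _ _ _ ?_ ha' hb' hc' (fun h => hn ⟨ha0 h.1, hb0 h.2.1, hc0 h.2.2⟩) h0
  have : r % 9 = 1 ∨ r % 9 = 2 ∨ r % 9 = 4 ∨ r % 9 = 5 ∨ r % 9 = 7 ∨ r % 9 = 8 := by omega
  have e9 : (r : ZMod 9) = ((r % 9 : ℤ) : ZMod 9) := by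
    exact (ZMod.intCast_mod r 9).symm
  rw [e9]
  rcases this with h | h | h | h | h | h <;> rw [h] <;> decide
end fw2

section fw3
variable {K : Type*} [Field K] [NumberField K] [IsCyclotomicExtension {3} ℚ K]

lemma exps (p₁ p₂ p₃ e1 e2 e3 : ℕ) (h1 : e1 < 3) (h2 : e2 < 3) (h3 : e3 < 3)
    (hmod : (p₁ % 9 = 2 ∧ p₂ % 9 = 2 ∧ p₃ % 9 = 5) ∨ (p₁ % 9 = 5 ∧ p₂ % 9 = 5 ∧ p₃ % 9 = 2))
    (h : ((p₁ ^ e1 * p₂ ^ e2 * p₃ ^ e3 : ℕ) : ZMod 9) = 1 ∨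
      ((p₁ ^ e1 * p₂ ^ e2 * p₃ ^ e3 : ℕ) : ZMod 9) = -1) : (e1 + e2) % 3 = e3 := by
  have c : ∀ p : ℕ, (p : ZMod 9) = ((p % 9 : ℕ) : ZMod 9) := fun p => (ZMod.natCast_mod p 9).symm
  push_cast at h
  rw [c p₁, c p₂, c p₃] at h
  rcases hmod with ⟨a, b, d⟩ | ⟨a, b, d⟩ <;> rw [a, b, d] at h <;> revert h <;>
    interval_cases e1 <;> interval_cases e2 <;> interval_cases e3 <;> decide

lemma forward [IsPrincipalIdealRing (𝓞 K)]
    (p₁ p₂ p₃ : ℕ) (hp₁ : p₁.Prime) (hp₂ : p₂.Prime) (hp₃ : p₃.Prime)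
    (hne₁₂ : p₁ ≠ p₂) (hne₁₃ : p₁ ≠ p₃)
    (hmod : (p₁ % 9 = 2 ∧ p₂ % 9 = 2 ∧ p₃ % 9 = 5) ∨ (p₁ % 9 = 5 ∧ p₂ % 9 = 5 ∧ p₃ % 9 = 2))
    (β : 𝓞 K) (hβ : β ≠ 0) (hcf : ∀ q : 𝓞 K, Prime q → ¬ q ^ 3 ∣ β)
    (H : ∀ q : 𝓞 K, Prime q → ∃ x y z : 𝓞 K, ¬(q ∣ x ∧ q ∣ y ∧ q ∣ z) ∧
      q ^ 5 ∣ β ^ 2 * x ^ 3 + 1 * y ^ 3 - β * ((p₁ * p₂ * p₃ ^ 2 : ℕ) : 𝓞 K) * z ^ 3) :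
    ∃ (u : 𝓞 K) (e1 e2 e3 : ℕ), (u = 1 ∨ u = -1) ∧ e1 < 3 ∧ e2 < 3 ∧ e3 < 3 ∧
      (e1 + e2) % 3 = e3 ∧ β = u * (p₁ ^ e1 * p₂ ^ e2 * p₃ ^ e3 : ℕ) := by
  have P1 := prime_p (K := K) hp₁ (by omega)
  have P2 := prime_p (K := K) hp₂ (by omega)
  have P3 := prime_p (K := K) hp₃ (by omega)
  have n12 : ¬ p₁ ∣ p₂ := fun h => hne₁₂ ((Nat.prime_dvd_prime_iff_eq hp₁ hp₂).mp h)
  have n13 : ¬ p₁ ∣ p₃ := fun h => hne₁₃ ((Nat.prime_dvd_prime_iff_eq hp₁ hp₃).mp h)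
  obtain ⟨e1, b1, he1, rfl, hb1, nd1, cf1⟩ := fact_p P1 β hβ hcf
  obtain ⟨e2, b2, he2, rfl, hb2, nd2, cf2⟩ := fact_p P2 b1 hb1 cf1
  obtain ⟨e3, u, he3, rfl, hb3, nd3, cf3⟩ := fact_p P3 b2 hb2 cf2
  have hu : IsUnit u := by
    by_contra hnu
    obtain ⟨q, hq, hqu⟩ := WfDvdMonoid.exists_irreducible_factor hnu hb3
    replace hq := hq.prime
    obtain ⟨x, y, z, hn, h⟩ := H q hq
    refine val_lem hq _ _ x y z ?_ ?_ (hcf q hq) hn h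
    · have key : ∀ p : 𝓞 K, Prime p → ¬ p ∣ u → ¬ q ∣ p := by
        intro p hp hpu hqp
        exact hpu (((hq.dvd_prime_iff_associated hp).mp hqp).symm.dvd.trans hqu)
      push_cast
      intro h
      rcases hq.dvd_or_dvd h with h | h
      · rcases hq.dvd_or_dvd h with h | h
        · exact key _ P1 (fun h => nd1 (h.mul_left _ |>.mul_left _)) h
        · exact key _ P2 (fun h => nd2 (h.mul_left _)) h
      · exact key _ P3 nd3 (hq.dvd_of_dvd_pow h)
    · exact hqu.mul_left _ |>.mul_left _ |>.mul_left _
  obtain ⟨e, he3, he2', -, heP, hun, hed, hec⟩ := ex_eta (K := K)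
  have hnb : ∀ a b : ℕ, ¬ p₁ ∣ p₂ ^ a * p₃ ^ b := by
    intro a b h
    rcases (Nat.Prime.dvd_mul hp₁).mp h with h | h
    · exact n12 (hp₁.dvd_of_dvd_pow h)
    · exact n13 (hp₁.dvd_of_dvd_pow h)
  have hu2 : u ^ 2 = 1 := by
    obtain ⟨x, y, z, hn, h⟩ := H _ P1
    obtain ⟨s, t, hst, h⟩ := local_p P1 u ((p₂ ^ e2 * p₃ ^ e3 : ℕ) : 𝓞 K)
      ((p₂ ^ 1 * p₃ ^ 2 : ℕ) : 𝓞 K) x y z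
      (fun h => P1.not_isUnit (isUnit_of_dvd_unit h hu))
      (not_dvd_nat P1 hp₁ dvd_rfl (hnb _ _)) (not_dvd_nat P1 hp₁ dvd_rfl (hnb _ _)) e1 he1 hn (by
        convert h using 1
        push_cast
        ring)
    have h9 : p₁ % 9 = 2 ∨ p₁ % 9 = 5 := by omega
    rcases h with h | h | h
    · have h1 := unit_lem hp₁ h9 (u ^ 2) s t (hu.pow 2) ((p₂ ^ e2 * p₃ ^ e3) ^ 2)
        (fun h => hnb _ _ (hp₁.dvd_of_dvd_pow h)) hst (by convert h using 1; push_cast; ring)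
      have h2 : (u ^ 2) ^ 3 = 1 := by
        rcases hun u hu with h | h | h <;> rw [h]
        · ring
        · exact he3
        · rw [← pow_mul, mul_comm, pow_mul, he3, one_pow]
      linear_combination h2 - u ^ 2 * h1
    · exact unit_lem hp₁ h9 u s t hu ((p₂ ^ e2 * p₃ ^ e3) * (p₂ ^ 1 * p₃ ^ 2) ^ 2)
        (fun h => by
          rcases (Nat.Prime.dvd_mul hp₁).mp h with h | h
          · exact hnb _ _ h
          · exact hnb _ _ (hp₁.dvd_of_dvd_pow h)) hst (by convert h using 1; push_cast; ring)
    · exact unit_lem hp₁ h9 u s t hu ((p₂ ^ e2 * p₃ ^ e3) * (p₂ ^ 1 * p₃ ^ 2))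
        (fun h => by
          rcases (Nat.Prime.dvd_mul hp₁).mp h with h | h
          · exact hnb _ _ h
          · exact hnb _ _ h) hst (by convert h using 1; push_cast; ring)
  have hu1 : u = 1 ∨ u = -1 := by
    have h0 : (u-1)*(u+1)=0 := by linear_combination hu2
    rcases mul_eq_zero.mp h0 with h | h
    · left; linear_combination h
    · right; linear_combination h
  refine ⟨u, e1, e2, e3, hu1, he1, he2, ‹_›, ?_, by push_cast; ring⟩
  obtain ⟨x, y, z, hn, h⟩ := H _ heP
  refine exps p₁ p₂ p₃ e1 e2 e3 he1 he2 ‹_› hmod ?_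
  have := lam_lem heP he2' hed hec ((p₁ ^ e1 * p₂ ^ e2 * p₃ ^ e3 : ℕ) : ℤ)
    ((p₁ * p₂ * p₃ ^ 2 : ℕ) : ℤ) (by
      rw [show (3 : ℤ) = ((3 : ℕ) : ℤ) from rfl, Int.natCast_dvd_natCast]
      intro h
      rcases (Nat.Prime.dvd_mul Nat.prime_three).mp h with h | h
      · rcases (Nat.Prime.dvd_mul Nat.prime_three).mp h with h | h
        · have := Nat.prime_three.dvd_of_dvd_pow h
          omega
        · have := Nat.prime_three.dvd_of_dvd_pow h
          omega
      · have := Nat.prime_three.dvd_of_dvd_pow h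
        omega) (by
      have c : ∀ p : ℕ, (p : ZMod 9) = ((p % 9 : ℕ) : ZMod 9) :=
        fun p => (ZMod.natCast_mod p 9).symm
      push_cast
      rw [c p₁, c p₂, c p₃]
      rcases hmod with ⟨a, b, d⟩ | ⟨a, b, d⟩ <;> rw [a, b, d] <;> decide) x y (u * z) (by
      rintro ⟨hx, hy, hz⟩
      refine hn ⟨hx, hy, ?_⟩
      rcases hu1 with rfl | rfl
      · simpa using hz
      · simpa using hz) (by
      rcases hu1 with rfl | rfl
      · convert h using 1; push_cast; ring
      · convert h using 1; push_cast; ring)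
  simpa using this

end fw3

/-- Lemma 2.5: let `p₁, p₂, p₃` be distinct rational primes with
`(p₁, p₂, p₃) ≡ (2,2,5)` or `(5,5,2) (mod 9)` and `A = p₁p₂p₃²`. A class `[α] ∈ k*/(k*)³`
satisfies `C_{A,α}(k_q) ≠ ∅` for every prime `q` of `ℤ[ζ₃]` iff it lies in the subgroup
generated by `[A]` and `[p₁p₂²]`, i.e. iff `α = A^m · (p₁p₂²)^n · γ³` for some `m, n ∈ ℤ`
and `γ ∈ k*`. (This set is the `√-3`-Selmer group `S(A)`.) -/
theorem stmt6 (K : Type*) [Field K] [NumberField K] [IsCyclotomicExtension {3} ℚ K]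
    (p₁ p₂ p₃ : ℕ) (hp₁ : p₁.Prime) (hp₂ : p₂.Prime) (hp₃ : p₃.Prime)
    (hne₁₂ : p₁ ≠ p₂) (hne₂₃ : p₂ ≠ p₃) (hne₁₃ : p₁ ≠ p₃)
    (hmod : (p₁ % 9 = 2 ∧ p₂ % 9 = 2 ∧ p₃ % 9 = 5) ∨ (p₁ % 9 = 5 ∧ p₂ % 9 = 5 ∧ p₃ % 9 = 2))
    (α : K) (hα : α ≠ 0) :
    (∀ (q : 𝓞 K) (hq : Prime q),
        ∃ x y z : (primeSpec hq).adicCompletion K,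
          ¬(x = 0 ∧ y = 0 ∧ z = 0) ∧
          algebraMap K ((primeSpec hq).adicCompletion K) α * x ^ 3
            + algebraMap K ((primeSpec hq).adicCompletion K) α⁻¹ * y ^ 3
            = algebraMap K ((primeSpec hq).adicCompletion K)
                ((p₁ * p₂ * p₃ ^ 2 : ℕ) : K) * z ^ 3)
      ↔ ∃ (m n : ℤ) (γ : K),
          α = ((p₁ * p₂ * p₃ ^ 2 : ℕ) : K) ^ m * ((p₁ * p₂ ^ 2 : ℕ) : K) ^ n * γ ^ 3 := by
  have := IsCyclotomicExtension.Rat.three_pid K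
  constructor
  · intro H
    obtain ⟨a0, d, hd, hα0⟩ := IsFractionRing.div_surjective (A := 𝓞 K) α
    have hd0 : d ≠ 0 := nonZeroDivisors.ne_zero hd
    have hinj : Function.Injective (algebraMap (𝓞 K) K) := IsFractionRing.injective (𝓞 K) K
    have hdK : algebraMap (𝓞 K) K d ≠ 0 := by
      rw [Ne, map_eq_zero_iff _ hinj]; exact hd0
    have ha0 : a0 ≠ 0 := by
      rintro rfl
      apply hα
      rw [← hα0]; simp
    obtain ⟨β, c, hc0, hac, hcf⟩ := cubefree (a0 * d ^ 2) (mul_ne_zero ha0 (pow_ne_zero 2 hd0))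
    have hβ : β ≠ 0 := by
      rintro rfl
      exact (mul_ne_zero ha0 (pow_ne_zero 2 hd0)) (by rw [hac]; ring)
    have hcK : algebraMap (𝓞 K) K c ≠ 0 := by
      rw [Ne, map_eq_zero_iff _ hinj]; exact hc0
    have hβK : algebraMap (𝓞 K) K β ≠ 0 := by
      rw [Ne, map_eq_zero_iff _ hinj]; exact hβ
    obtain ⟨g, hg⟩ : ∃ g : K, g = algebraMap (𝓞 K) K c / algebraMap (𝓞 K) K d := ⟨_, rfl⟩
    have hg0 : g ≠ 0 := by rw [hg]; exact div_ne_zero hcK hdK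
    have hαβ : α = algebraMap (𝓞 K) K β * g ^ 3 := by
      have h1 : algebraMap (𝓞 K) K a0 * algebraMap (𝓞 K) K d ^ 2
          = algebraMap (𝓞 K) K β * algebraMap (𝓞 K) K c ^ 3 := by
        rw [← map_pow, ← map_mul, hac, map_mul, map_pow]
      rw [← hα0, hg]
      field_simp
      linear_combination h1
    obtain ⟨u, e1, e2, e3, hu, h1, h2, h3, h12, hβe⟩ :=
      forward p₁ p₂ p₃ hp₁ hp₂ hp₃ hne₁₂ hne₁₃ hmod β hβ hcf (by
        intro q hq
        refine transfer K hq (β ^ 2) 1 (β * ((p₁ * p₂ * p₃ ^ 2 : ℕ) : 𝓞 K)) ?_ 5 (by norm_num)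
        obtain ⟨x, y, z, hne, he⟩ := H q hq
        have hG : algebraMap K ((primeSpec hq).adicCompletion K) g ≠ 0 := by
          rw [Ne, map_eq_zero]; exact hg0
        have hB : algebraMap K ((primeSpec hq).adicCompletion K) (algebraMap (𝓞 K) K β) ≠ 0 := by
          rw [Ne, map_eq_zero]; exact hβK
        refine ⟨algebraMap K _ g * x, (algebraMap K _ g)⁻¹ * y, z, ?_, ?_⟩
        · rintro ⟨hx, hy, hz⟩
          apply hne
          refine ⟨?_, ?_, hz⟩
          · exact (mul_eq_zero.mp hx).resolve_left hG
          · exact (mul_eq_zero.mp hy).resolve_left (inv_ne_zero hG)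
        · rw [IsScalarTower.algebraMap_apply (𝓞 K) K, IsScalarTower.algebraMap_apply (𝓞 K) K,
            IsScalarTower.algebraMap_apply (𝓞 K) K _ (β * _)]
          rw [hαβ] at he
          simp only [map_mul, map_pow, map_one, map_natCast, map_inv₀] at he ⊢
          generalize algebraMap K ((primeSpec hq).adicCompletion K) g = G at *
          generalize algebraMap K ((primeSpec hq).adicCompletion K) (algebraMap (𝓞 K) K β) = B at *
          have e : B ^ 2 * (G * x) ^ 3 + 1 * (G⁻¹ * y) ^ 3
              = B * (B * G ^ 3 * x ^ 3 + (B * G ^ 3)⁻¹ * y ^ 3) := by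
            field_simp
          rw [e, he]; ring)
    obtain ⟨k, hk⟩ : ∃ k : ℕ, 2 * e1 + 4 * e3 = e2 + 3 * k := by
      refine ⟨(2 * e1 + 4 * e3 - e2) / 3, ?_⟩
      omega
    have q1 : (p₁ : K) ≠ 0 := by exact_mod_cast hp₁.ne_zero
    have q2 : (p₂ : K) ≠ 0 := by exact_mod_cast hp₂.ne_zero
    have q3 : (p₃ : K) ≠ 0 := by exact_mod_cast hp₃.ne_zero
    have hu3 : algebraMap (𝓞 K) K u ^ 3 = algebraMap (𝓞 K) K u := by
      rcases hu with rfl | rfl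
      · simp
      · simp only [map_neg, map_one]; ring
    refine ⟨((2 * e3 : ℕ) : ℤ), ((e1 + e3 : ℕ) : ℤ), algebraMap (𝓞 K) K u * g /
      ((p₁ : K) ^ e3 * (p₂ : K) ^ k * (p₃ : K) ^ e3), ?_⟩
    rw [zpow_natCast, zpow_natCast, hαβ, hβe, map_mul, map_natCast]
    simp only [Nat.cast_mul, Nat.cast_pow]
    have hp2 : (p₂ : K) ^ (2 * e1 + 4 * e3) = (p₂ : K) ^ (e2 + 3 * k) := by rw [hk]
    rw [div_pow, mul_pow (algebraMap (𝓞 K) K u), hu3, ← mul_div_assoc, eq_div_iff (pow_ne_zero 3 (mul_ne_zero (mul_ne_zero (pow_ne_zero _ q1) (pow_ne_zero _ q2)) (pow_ne_zero _ q3)))]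
    have e : ((p₁ : K) * p₂ * p₃ ^ 2) ^ (2 * e3) * ((p₁ : K) * p₂ ^ 2) ^ (e1 + e3)
        = p₁ ^ (e1 + 3 * e3) * p₂ ^ (2 * e1 + 4 * e3) * p₃ ^ (4 * e3) := by
      ring
    rw [e, hp2]
    ring
  · rintro ⟨m, n, γ, hc⟩ q hq
    exact backward hq p₁ p₂ p₃ hp₁ hp₂ hp₃ hne₁₂ hne₂₃ hne₁₃ hmod α hα m n γ hc
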